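/- Let p be a prime number. There exist a field K of characteristic p, a Henselian valuation ring A with field of fractions K which is not a field and whose value group Kˣ/Aˣ is isomorphic to a nonzero subgroup of ℝ not isomorphic to ℤ, a nonzero element b of the maximal ideal m_A of A, and cyclic Galois extensions L₁ and L₂ of K of degree p, such that the ideal H₁ of A associated to L₁/K equals the principal ideal b^p·A and the ideal H₂ of A associated to L₂/K equals the (non-principal) ideal b^p·m_A. -/

import Mathlib

set_option synthInstance.maxHeartbeats 400000
set_option linter.unusedVariables false

/-- `H` is the ideal of `A` associated to a cyclic extension `L/K` of prime degree:
for any generator `σ` of `Gal(L/K)`, `H` is generated by the elements `a` of `A` whose image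
in `K` is the norm of an element of the ideal `J_σ` of the integral closure `B` of `A` in `L`
generated by the elements `σ(x)·x⁻¹ − 1`, `x ∈ Lˣ`. -/
def IsAssociatedIdeal {K : Type} [Field K] (A : ValuationSubring K)
    (L : Type) [Field L] [Algebra K L] (H : Ideal ↥A) : Prop :=
  ∀ [instAL : Algebra ↥A L] [instTower : IsScalarTower ↥A K L] (σ : L ≃ₐ[K] L),
    (∀ τ : L ≃ₐ[K] L, τ ∈ Subgroup.zpowers σ) →
    H = Ideal.span {a : ↥A |
      ∃ b ∈ Ideal.span {b : ↥(integralClosure ↥A L) |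
          ∃ x : Lˣ, (b : L) = σ (x : L) * (x : L)⁻¹ - 1},
        algebraMap ↥A K a = Algebra.norm K ((b : L))}

/-- `L/K` is a cyclic Galois extension of degree `p`. -/
def IsCyclicOfDegree (K : Type) [Field K] (L : Type) [Field L] [Algebra K L] (p : ℕ) : Prop :=
  IsGalois K L ∧ FiniteDimensional K L ∧ IsCyclic (L ≃ₐ[K] L) ∧ Nat.card (L ≃ₐ[K] L) = p

section hahn
open HahnSeries

abbrev Gp := ℝ ×ₗ (Lex (ℕ → ℤ))

noncomputable def hnorm {p : ℕ} (x : HahnSeries Gp (ZMod p)) : ℝ :=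
  open Classical in if x = 0 then 0 else Real.exp (-(ofLex x.order).1)

lemma hnorm_of_ne {p : ℕ} {x : HahnSeries Gp (ZMod p)} (h : x ≠ 0) :
    hnorm x = Real.exp (-(ofLex x.order).1) := if_neg h

lemma hnorm_zero {p : ℕ} : hnorm (0 : HahnSeries Gp (ZMod p)) = 0 := if_pos rfl

lemma hnorm_pos {p : ℕ} {x : HahnSeries Gp (ZMod p)} (h : x ≠ 0) : 0 < hnorm x := by
  rw [hnorm_of_ne h]; exact Real.exp_pos _

lemma hnorm_nonneg {p : ℕ} (x : HahnSeries Gp (ZMod p)) : 0 ≤ hnorm x := by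
  by_cases h : x = 0
  · rw [h, hnorm_zero]
  · exact (hnorm_pos h).le

lemma hnorm_add_le_max {p : ℕ} (x y : HahnSeries Gp (ZMod p)) :
    hnorm (x + y) ≤ max (hnorm x) (hnorm y) := by
  by_cases hx : x = 0
  · simp [hx, hnorm_zero, hnorm_nonneg]
  by_cases hy : y = 0
  · simp [hy, hnorm_zero, hnorm_nonneg]
  by_cases h : x + y = 0
  · rw [h, hnorm_zero]; exact le_max_of_le_left (hnorm_nonneg x)
  rw [hnorm_of_ne hx, hnorm_of_ne hy, hnorm_of_ne h]
  have := min_order_le_order_add h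
  rcases min_le_iff.1 this with h1 | h1
  · apply le_max_of_le_left
    have := Prod.Lex.monotone_fst _ _ h1
    gcongr
  · apply le_max_of_le_right
    have := Prod.Lex.monotone_fst _ _ h1
    gcongr

lemma hnorm_mul {p : ℕ} [Fact p.Prime] (x y : HahnSeries Gp (ZMod p)) :
    hnorm (x * y) = hnorm x * hnorm y := by
  by_cases hx : x = 0
  · simp [hx, hnorm_zero]
  by_cases hy : y = 0
  · simp [hy, hnorm_zero]
  rw [hnorm_of_ne hx, hnorm_of_ne hy, hnorm_of_ne (mul_ne_zero hx hy), order_mul hx hy,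
    ← Real.exp_add]
  congr 1
  simp
  ring

noncomputable def habs (p : ℕ) [Fact p.Prime] : AbsoluteValue (HahnSeries Gp (ZMod p)) ℝ where
  toFun := hnorm
  map_mul' := hnorm_mul
  nonneg' := hnorm_nonneg
  eq_zero' x := ⟨fun h => by by_contra h'; exact (hnorm_pos h').ne' h, fun h => by simp [h, hnorm_zero]⟩
  add_le' x y := (hnorm_add_le_max x y).trans
    (max_le_add_of_nonneg (hnorm_nonneg x) (hnorm_nonneg y))

lemma hnorm_ge {p : ℕ} {x : HahnSeries Gp (ZMod p)} {g : Gp} (h : x.coeff g ≠ 0) :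
    Real.exp (-(ofLex g).1) ≤ hnorm x := by
  have hx : x ≠ 0 := by rintro rfl; simp at h
  rw [hnorm_of_ne hx]
  have := Prod.Lex.monotone_fst _ _ (order_le_of_coeff_ne_zero h)
  gcongr

lemma hnorm_le {p : ℕ} {x : HahnSeries Gp (ZMod p)} {g : Gp} (h : ∀ j < g, x.coeff j = 0) :
    hnorm x ≤ Real.exp (-(ofLex g).1) := by
  by_cases hx : x = 0
  · rw [hx, hnorm_zero]; positivity
  rw [hnorm_of_ne hx]
  have := Prod.Lex.monotone_fst _ _ ((le_order_iff_forall hx).2 h)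
  gcongr

lemma hnorm_single {p : ℕ} [Fact p.Prime] (g : Gp) :
    hnorm (single g (1 : ZMod p)) = Real.exp (-(ofLex g).1) := by
  rw [hnorm_of_ne (by simp), order_single one_ne_zero]

def cd (m : ℕ) : Gp →+ ℤ where
  toFun g := ofLex (ofLex g).2 m
  map_zero' := rfl
  map_add' _ _ := rfl

def Gn (p n : ℕ) : AddSubgroup Gp where
  carrier := {g | (p : ℤ) ∣ cd 0 g ∧ ∀ m > n, (p : ℤ) ∣ cd m g}
  zero_mem' := by simp
  add_mem' := by
    rintro a b ⟨ha, ha'⟩ ⟨hb, hb'⟩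
    exact ⟨by simpa using dvd_add ha hb, fun m hm => by simpa using dvd_add (ha' m hm) (hb' m hm)⟩
  neg_mem' := by
    rintro a ⟨ha, ha'⟩
    exact ⟨by simpa using ha, fun m hm => by simpa using (ha' m hm)⟩

lemma Gn_mono (p : ℕ) : Monotone (Gn p) := fun _ _ h _ hg =>
  ⟨hg.1, fun m hm => hg.2 m (lt_of_le_of_lt h hm)⟩

noncomputable def sF (p n : ℕ) [Fact p.Prime] : Subfield (HahnSeries Gp (ZMod p)) :=
  (embDomainRingHom (R := ZMod p) (Gn p n).subtype Subtype.val_injective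
    (fun _ _ => Iff.rfl)).fieldRange

lemma mem_sF {p n : ℕ} [Fact p.Prime] {x : HahnSeries Gp (ZMod p)} :
    x ∈ sF p n ↔ ∀ g ∉ Gn p n, x.coeff g = 0 := by
  constructor
  · rintro ⟨y, rfl⟩ g hg
    apply embDomain_of_notMem_range
    rintro ⟨a, rfl⟩
    exact hg a.2
  · intro h
    refine ⟨⟨fun g => x.coeff g.1, ?_⟩, ?_⟩
    · intro f
      exact x.isPWO_support' (fun n => ⟨(f n).1.1, (f n).2⟩)
    · ext g
      by_cases hg : g ∈ Gn p n
      · exact embDomain_coeff (a := (⟨g, hg⟩ : Gn p n))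
      · rw [h g hg]
        apply embDomain_of_notMem_range
        rintro ⟨a, rfl⟩
        exact hg a.2

lemma sF_mono (p : ℕ) [Fact p.Prime] : Monotone (fun n => sF p n) := fun _ _ h _ hx =>
  mem_sF.2 fun g hg => mem_sF.1 hx g (fun h' => hg (Gn_mono p h h'))

noncomputable def FF (p : ℕ) [Fact p.Prime] : Subfield (HahnSeries Gp (ZMod p)) := ⨆ n, sF p n

lemma mem_FF {p : ℕ} [Fact p.Prime] {x : HahnSeries Gp (ZMod p)} :
    x ∈ FF p ↔ ∃ n, x ∈ sF p n :=
  Subfield.mem_iSup_of_directed (sF_mono p).directed_le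

noncomputable def gam (n : ℕ) : Gp := toLex (-(1/(n+1) : ℝ), toLex (Pi.single (n+1) 1))

lemma gam_fst (n : ℕ) : (ofLex (gam n)).1 = -(1/(n+1) : ℝ) := rfl

lemma gam_strictMono : StrictMono gam := by
  apply strictMono_nat_of_lt_succ
  intro n
  rw [gam, gam, Prod.Lex.toLex_lt_toLex]
  left
  simp only [neg_lt_neg_iff]
  push_cast
  apply one_div_lt_one_div_of_lt <;> linarith [(Nat.cast_nonneg n : (0:ℝ) ≤ n)]

/-- the series `∑ t^(s n)` -/
noncomputable def ser (p : ℕ) (s : ℕ → Gp) (hs : StrictMono s) : HahnSeries Gp (ZMod p) where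
  coeff g := open Classical in if g ∈ Set.range s then 1 else 0
  isPWO_support' := by
    have h1 : (Set.range s).IsPWO := by
      rw [← Set.image_univ]
      exact (Set.isPWO_of_wellQuasiOrderedLE _).image_of_monotone hs.monotone
    apply h1.mono
    intro g hg
    by_contra h
    simp [h] at hg

lemma ser_coeff (p : ℕ) (s : ℕ → Gp) (hs : StrictMono s) (n : ℕ) : (ser p s hs).coeff (s n) = 1 :=
  if_pos ⟨n, rfl⟩

lemma ser_coeff' (p : ℕ) (s : ℕ → Gp) (hs : StrictMono s) (g : Gp) (hg : g ∉ Set.range s) :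
    (ser p s hs).coeff g = 0 := if_neg hg

lemma ser_trunc (p : ℕ) (s : ℕ → Gp) (hs : StrictMono s) (n : ℕ) :
    ∀ j < s n, (ser p s hs - ∑ i ∈ Finset.range n, single (s i) (1 : ZMod p)).coeff j = 0 := by
  intro j hj
  rw [coeff_sub, coeff_sum]
  by_cases h : j ∈ Set.range s
  · obtain ⟨m, rfl⟩ := h
    rw [ser_coeff]
    have hm : m < n := hs.lt_iff_lt.1 hj
    rw [Finset.sum_eq_single m]
    · simp
    · intro b _ hb
      exact coeff_single_of_ne (fun h => hb (hs.injective h).symm)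
    · intro h; simp [hm] at h
  · rw [ser_coeff' _ _ _ _ h, Finset.sum_eq_zero, sub_zero]
    intro i _
    exact coeff_single_of_ne (fun h' => h ⟨i, h'.symm⟩)

lemma smul_mem_Gn (p : ℕ) (g : Gp) : p • g ∈ Gn p 0 := by
  have h (m : ℕ) : (p : ℤ) ∣ cd m (p • g) := by
    rw [map_nsmul, nsmul_eq_mul]; exact dvd_mul_right _ _
  exact ⟨h 0, fun m _ => h m⟩

lemma gam_mem (p i n : ℕ) (h : i < n) : gam i ∈ Gn p n := by
  constructor
  · simp [gam, cd]
  · intro m hm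
    have : m ≠ i + 1 := by omega
    simp [gam, cd, this]

lemma gam_not_mem (p n : ℕ) [hp : Fact p.Prime] : gam n ∉ Gn p n := by
  rintro ⟨-, h⟩
  have h1 := h (n+1) (by simp)
  have e : cd (n+1) (gam n) = 1 := Pi.single_eq_same (M := fun _ => ℤ) (n+1) 1
  rw [e] at h1
  have := Int.le_of_dvd one_pos h1
  have := hp.out.two_le
  omega

/-- the exponent of `z` -/
def zet : Gp := toLex (0, toLex (Pi.single 0 1))

lemma zet_not_mem (p n : ℕ) [hp : Fact p.Prime] : zet ∉ Gn p n := by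
  rintro ⟨h, -⟩
  have e : cd 0 zet = 1 := by
    have : cd 0 zet = (Pi.single (M := fun _ : ℕ => ℤ) 0 1) 0 := rfl
    rw [this, Pi.single_eq_same]
  rw [e] at h
  have := Int.le_of_dvd one_pos h
  have := hp.out.two_le
  omega

lemma single_mem_sF {p n : ℕ} [Fact p.Prime] {g : Gp} (hg : g ∈ Gn p n) :
    single g (1 : ZMod p) ∈ sF p n :=
  mem_sF.2 fun _ hg' => coeff_single_of_ne (fun h => hg' (h ▸ hg))

lemma real_mem (p : ℕ) (r : ℝ) : (toLex (r, 0) : Gp) ∈ Gn p 0 := by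
  have h (m : ℕ) : cd m (toLex (r, 0) : Gp) = 0 := rfl
  exact ⟨by simp [h], by simp [h]⟩

instance charP_hahn (p : ℕ) [Fact p.Prime] : CharP (HahnSeries Gp (ZMod p)) p :=
  charP_of_injective_ringHom (f := (C : ZMod p →+* HahnSeries Gp (ZMod p))) C_injective p

lemma gamp_strictMono (p : ℕ) [hp : Fact p.Prime] : StrictMono (fun n => p • gam n) := fun _ _ h =>
  nsmul_lt_nsmul_right hp.out.ne_zero (gam_strictMono h)

lemma unorm_sub_le_max {E : Type*} [SeminormedAddGroup E] [IsUltrametricDist E] (x y : E) :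
    ‖x - y‖ ≤ max ‖x‖ ‖y‖ := by
  rw [sub_eq_add_neg, ← norm_neg y]; exact IsUltrametricDist.norm_add_le_max _ _

lemma est_gt {E : Type*} [NormedField E] [IsUltrametricDist E] (p : ℕ) [hp : Fact p.Prime]
    [CharP E p] (W f g : E) (R : ℝ) (hR : 1 < R) (hf : ‖f - W ^ p‖ ≤ R ^ p) (hW : ‖W‖ ≤ R ^ p)
    (hg : R < ‖W - g‖) : R ^ p < ‖f - g ^ p + g‖ := by
  have hp2 := hp.out.two_le
  have e : f - g ^ p + g = (W - g) ^ p + ((f - W ^ p) + g) := by rw [sub_pow_char]; ring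
  have h1 : R ^ p < ‖(W - g) ^ p‖ := by
    rw [norm_pow]; exact pow_lt_pow_left₀ hg (by linarith) (by omega)
  have h2 : ‖g‖ < ‖(W - g) ^ p‖ := by
    by_cases h : ‖g‖ ≤ R ^ p
    · exact h.trans_lt h1
    · push Not at h
      have h3 : ‖W - g‖ = ‖g‖ := by
        rw [sub_eq_add_neg, IsUltrametricDist.norm_add_eq_max_of_norm_ne_norm
          (by rw [norm_neg]; exact (hW.trans_lt h).ne), norm_neg]
        exact max_eq_right (hW.trans_lt h).le
      rw [norm_pow, h3]
      have : 1 < ‖g‖ := by rw [← h3]; linarith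
      exact lt_self_pow₀ this (by omega)
  have h4 : ‖(f - W ^ p) + g‖ < ‖(W - g) ^ p‖ :=
    (IsUltrametricDist.norm_add_le_max _ _).trans_lt (max_lt (hf.trans_lt h1) h2)
  rw [e, IsUltrametricDist.norm_add_eq_max_of_norm_ne_norm h4.ne', max_eq_left h4.le]
  exact h1

lemma est_ge {E : Type*} [NormedField E] [IsUltrametricDist E] (p : ℕ) [hp : Fact p.Prime]
    [CharP E p] (W g : E) (R : ℝ) (hR : 1 < R) (hW : ‖W‖ = R)
    (hg : R ≤ ‖W - g‖) : R ^ p ≤ ‖W ^ p - g ^ p + g‖ := by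
  have hp2 := hp.out.two_le
  have h1 : R ^ p ≤ ‖(W - g) ^ p‖ := by
    rw [norm_pow]; exact pow_le_pow_left₀ (by linarith) hg _
  have h2 : ‖g‖ < ‖(W - g) ^ p‖ := by
    have h3 : ‖g‖ ≤ ‖W - g‖ := by
      calc ‖g‖ = ‖W - (W - g)‖ := by congr 1; ring
        _ ≤ _ := (unorm_sub_le_max _ _).trans (max_le (by rw [hW]; exact hg) le_rfl)
    rw [norm_pow]
    exact h3.trans_lt (lt_self_pow₀ (by linarith) (by omega))
  rw [← sub_pow_char, IsUltrametricDist.norm_add_eq_max_of_norm_ne_norm h2.ne', max_eq_left h2.le]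
  exact h1

lemma est_le {E : Type*} [NormedField E] [IsUltrametricDist E] (p : ℕ) [hp : Fact p.Prime]
    [CharP E p] (W f g : E) (r : ℝ) (hf : ‖f - W ^ p‖ ≤ r) (hW : ‖W‖ ≤ r) (h1 : 1 ≤ r)
    (hg : ‖W - g‖ ^ p ≤ r) : ‖f - g ^ p + g‖ ≤ r := by
  have e : f - g ^ p + g = (W - g) ^ p + ((f - W ^ p) + (W - (W - g))) := by
    rw [sub_pow_char]; ring
  have hg' : ‖W - g‖ ≤ r := by
    by_cases h : ‖W - g‖ ≤ 1
    · exact h.trans h1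
    · push Not at h
      exact (le_self_pow₀ h.le hp.out.ne_zero).trans hg
  rw [e]
  refine (IsUltrametricDist.norm_add_le_max _ _).trans (max_le (by rwa [norm_pow]) ?_)
  refine (IsUltrametricDist.norm_add_le_max _ _).trans (max_le hf ?_)
  exact (unorm_sub_le_max _ _).trans (max_le hW hg')

theorem exists_F (p : ℕ) [hp : Fact p.Prime] : ∃ (F : Type) (_ : NormedField F),
    IsUltrametricDist F ∧ CharP F p ∧ (∀ r : ℝ, ∃ x : F, x ≠ 0 ∧ Real.log ‖x‖ = r) ∧
    ∃ b f₁ f₂ : F, b ≠ 0 ∧ ‖b‖ < 1 ∧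
      (‖f₁‖ = ‖b‖⁻¹ ^ p ∧ ∀ g : F, ‖b‖⁻¹ ^ p ≤ ‖f₁ - g ^ p + g‖) ∧
      ((∀ g : F, ‖b‖⁻¹ ^ p < ‖f₂ - g ^ p + g‖) ∧
        ∀ r > ‖b‖⁻¹ ^ p, ∃ g : F, ‖f₂ - g ^ p + g‖ ≤ r) := by
  let nE : NormedField (HahnSeries Gp (ZMod p)) := (habs p).toNormedField
  have hn (x : HahnSeries Gp (ZMod p)) : ‖x‖ = hnorm x := rfl
  have uE : IsUltrametricDist (HahnSeries Gp (ZMod p)) :=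
    IsUltrametricDist.isUltrametricDist_of_forall_norm_add_le_max_norm hnorm_add_le_max
  have hp2 := hp.out.two_le
  let nF : NormedField (FF p) := SubfieldClass.toNormedField (FF p)
  have hnF (x : FF p) : ‖x‖ = ‖(x : HahnSeries Gp (ZMod p))‖ := rfl
  have tm (r : ℝ) : single (toLex (r, 0) : Gp) (1 : ZMod p) ∈ FF p :=
    mem_FF.2 ⟨0, single_mem_sF (real_mem p r)⟩
  let b : FF p := ⟨_, tm 1⟩
  let ib : HahnSeries Gp (ZMod p) := single (toLex (-1, 0) : Gp) (1 : ZMod p)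
  let ib' : FF p := ⟨ib, tm (-1)⟩
  have hb : ‖b‖ = Real.exp (-1) := by rw [hnF, hn]; exact hnorm_single _
  have hbi : ‖b‖⁻¹ = Real.exp 1 := by rw [hb, Real.exp_neg, inv_inv]
  have hib : ‖ib‖ = Real.exp 1 := by
    rw [hn]; refine (hnorm_single _).trans ?_; simp
  have ib0 : ib ≠ 0 := by simp [ib]
  have hR : 1 < Real.exp 1 := by simp
  -- the elements
  let z : HahnSeries Gp (ZMod p) := single zet 1
  have hz : ‖z‖ = 1 := by rw [hn]; refine (hnorm_single _).trans ?_; simp [zet]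
  have hzp : z ^ p ∈ FF p := by
    refine mem_FF.2 ⟨0, ?_⟩
    simp only [z, single_pow, one_pow]
    exact single_mem_sF (smul_mem_Gn p _)
  let w := ser p gam gam_strictMono
  let V := ser p _ (gamp_strictMono p)
  have hV : V ∈ FF p := by
    refine mem_FF.2 ⟨0, mem_sF.2 fun g hg => ser_coeff' _ _ _ _ ?_⟩
    rintro ⟨n, rfl⟩
    exact hg (smul_mem_Gn p _)
  let wn (n : ℕ) : HahnSeries Gp (ZMod p) := ∑ i ∈ Finset.range n, single (gam i) (1 : ZMod p)
  have hwn (n : ℕ) : wn n ∈ FF p := by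
    refine mem_FF.2 ⟨n, sum_mem fun i hi => single_mem_sF (gam_mem p i n (by simpa using hi))⟩
  have hwwn (n : ℕ) : ‖w - wn n‖ ≤ Real.exp (1 / (n + 1)) := by
    have := hnorm_le (ser_trunc p gam gam_strictMono n)
    rwa [gam_fst, neg_neg] at this
  have hVn (n : ℕ) : ‖V - wn n ^ p‖ ≤ Real.exp (1 / (n + 1)) ^ p := by
    have := hnorm_le (ser_trunc p _ (gamp_strictMono p) n)
    have e : (ofLex (p • gam n)).1 = p * (-(1/(n+1) : ℝ)) := by
      have : (ofLex (p • gam n)).1 = p • (ofLex (gam n)).1 := rfl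
      rw [this, gam_fst, nsmul_eq_mul]
    rw [e] at this
    rw [← Real.exp_nat_mul]
    have e2 : wn n ^ p = ∑ i ∈ Finset.range n, single (p • gam i) (1 : ZMod p) := by
      simp only [wn]
      rw [sum_pow_char]
      simp [single_pow]
    rw [e2]
    refine le_trans this (le_of_eq ?_)
    congr 1
    ring
  have hVw (n : ℕ) : ‖V - w ^ p‖ ≤ Real.exp (1 / (n + 1)) ^ p := by
    have e : V - w ^ p = (V - wn n ^ p) - (w - wn n) ^ p := by rw [sub_pow_char]; ring
    rw [e]
    refine (unorm_sub_le_max _ _).trans (max_le (hVn n) ?_)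
    rw [norm_pow]
    exact pow_le_pow_left₀ (norm_nonneg _) (hwwn n) _
  have hlim : Filter.Tendsto (fun n : ℕ => Real.exp (1 / ((n : ℝ) + 1)) ^ p) Filter.atTop
      (nhds 1) := by
    have h1 : Filter.Tendsto (fun n : ℕ => (1 / ((n : ℝ) + 1))) Filter.atTop (nhds 0) :=
      tendsto_one_div_add_atTop_nhds_zero_nat
    have := ((Real.continuous_exp.tendsto 0).comp h1).pow p
    simpa using this
  have hVw1 : ‖V - w ^ p‖ ≤ 1 := ge_of_tendsto' hlim hVw
  have hw : ‖w‖ ≤ Real.exp 1 := by simpa [wn] using hwwn 0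
  have key (x : HahnSeries Gp (ZMod p)) (h : x ∈ FF p) : 1 < ‖w - x‖ := by
    obtain ⟨n, hx⟩ := mem_FF.1 h
    have h1 : (w - x).coeff (gam n) ≠ 0 := by
      rw [coeff_sub, mem_sF.1 hx _ (gam_not_mem p n), ser_coeff]; simp
    refine lt_of_lt_of_le ?_ (hnorm_ge h1)
    rw [gam_fst, neg_neg, Real.one_lt_exp_iff]
    positivity
  have keyz (x : HahnSeries Gp (ZMod p)) (h : x ∈ FF p) : 1 ≤ ‖z - x‖ := by
    obtain ⟨n, hx⟩ := mem_FF.1 h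
    have h1 : (z - x).coeff zet ≠ 0 := by
      rw [coeff_sub, mem_sF.1 hx _ (zet_not_mem p n)]; simp [z]
    refine le_trans ?_ (hnorm_ge h1)
    simp [zet]
  have scale (y : HahnSeries Gp (ZMod p)) (g : FF p) :
      ‖y * ib - g‖ = Real.exp 1 * ‖y - g / ib‖ := by
    rw [← hib, ← norm_mul]; congr 1; field_simp
  have gib (g : FF p) : (g : HahnSeries Gp (ZMod p)) / ib ∈ FF p := (g / ib').2
  refine ⟨FF p, nF, ?_, ?_, ?_, b, ⟨z ^ p, hzp⟩ * ib' ^ p, ⟨V, hV⟩ * ib' ^ p, ?_, ?_, ⟨?_, ?_⟩, ?_, ?_⟩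
  · exact IsUltrametricDist.isUltrametricDist_of_forall_norm_add_le_max_norm
      fun x y => hnorm_add_le_max _ _
  · exact (FF p).subtype.charP Subtype.val_injective p
  · intro r
    refine ⟨⟨_, tm (-r)⟩, ?_, ?_⟩
    · intro h
      have := congrArg Subtype.val h
      simp at this
    · rw [hnF, hn]
      simp only
      rw [hnorm_single]
      simp
  · intro h
    rw [h, norm_zero] at hb
    exact (Real.exp_pos _).ne hb
  · rw [hb]; simp
  · rw [hbi, norm_mul, norm_pow, hnF, hnF]
    simp only [ib']
    rw [norm_pow, hz, hib]; simp
  · intro g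
    rw [hbi, hnF]
    have := est_ge p (z * ib) (g : HahnSeries Gp (ZMod p)) (Real.exp 1) hR (by rw [norm_mul, hz, hib, one_mul])
      (by rw [scale]; nlinarith [keyz _ (gib g)])
    rw [mul_pow] at this
    exact this
  · intro g
    rw [hbi, hnF]
    refine est_gt p (w * ib) _ (g : HahnSeries Gp (ZMod p)) (Real.exp 1) hR ?_ ?_ ?_
    · show ‖V * ib ^ p - _‖ ≤ _
      rw [mul_pow, ← sub_mul, norm_mul, norm_pow, hib]
      exact mul_le_of_le_one_left (by positivity) hVw1
    · rw [norm_mul, hib]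
      calc _ ≤ Real.exp 1 * Real.exp 1 := by gcongr
        _ = Real.exp 1 ^ 2 := by ring
        _ ≤ _ := pow_le_pow_right₀ hR.le hp2
    · rw [scale]; nlinarith [key _ (gib g)]
  · intro r hr
    rw [hbi] at hr
    have hlim2 := hlim.const_mul (Real.exp 1 ^ p)
    rw [mul_one] at hlim2
    obtain ⟨n, hn'⟩ := (hlim2.eventually_lt_const hr).exists
    refine ⟨⟨wn n, hwn n⟩ * ib', ?_⟩
    rw [hnF]
    refine est_le p (w * ib) _ _ r ?_ ?_ ?_ ?_
    · show ‖V * ib ^ p - _‖ ≤ _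
      rw [mul_pow, ← sub_mul, norm_mul, norm_pow, hib]
      exact (mul_le_of_le_one_left (by positivity) hVw1).trans hr.le
    · rw [norm_mul, hib]
      calc _ ≤ Real.exp 1 * Real.exp 1 := by gcongr
        _ = Real.exp 1 ^ 2 := by ring
        _ ≤ _ := pow_le_pow_right₀ hR.le hp2
        _ ≤ _ := hr.le
    · exact (one_le_pow₀ hR.le).trans hr.le
    · show ‖w * ib - wn n * ib‖ ^ p ≤ r
      rw [← sub_mul, norm_mul, hib, mul_pow, mul_comm]
      refine le_trans ?_ hn'.le
      gcongr
      exact hwwn n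

end hahn

/-- the valuation ring of an ultrametric normed field -/
def nball (K : Type*) [NormedField K] [IsUltrametricDist K] : ValuationSubring K where
  carrier := {x | ‖x‖ ≤ 1}
  mul_mem' := by
    intro a b ha hb
    simp only [Set.mem_ofPred_eq] at *
    rw [norm_mul]; exact mul_le_one₀ ha (norm_nonneg _) hb
  one_mem' := by simp
  add_mem' := by
    intro a b ha hb
    exact (IsUltrametricDist.norm_add_le_max a b).trans (max_le ha hb)
  zero_mem' := by simp
  neg_mem' := by simp
  mem_or_inv_mem' := by
    intro x
    by_cases h : ‖x‖ ≤ 1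
    · exact Or.inl h
    · right
      simp only [Set.mem_ofPred_eq, norm_inv]
      exact inv_le_one_of_one_le₀ (le_of_not_ge h)

lemma mem_nball {K : Type*} [NormedField K] [IsUltrametricDist K] {x : K} :
    x ∈ nball K ↔ ‖x‖ ≤ 1 := Iff.rfl

lemma norm_eq_one_of_pow {K : Type*} [NormedField K] {p : ℕ} (hp : 2 ≤ p) {x : K}
    (h : x ^ p = x) : ‖x‖ = 0 ∨ ‖x‖ = 1 := by
  by_cases h0 : ‖x‖ = 0
  · exact Or.inl h0
  right
  have h1 : ‖x‖ ^ p = ‖x‖ := by rw [← norm_pow, h]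
  have h2 : ‖x‖ ^ (p - 1) = 1 := by
    have : ‖x‖ ^ (p - 1) * ‖x‖ = 1 * ‖x‖ := by
      rw [← pow_succ, one_mul, Nat.sub_add_cancel (by omega), h1]
    exact mul_right_cancel₀ h0 this
  exact (pow_eq_one_iff_of_nonneg (norm_nonneg _) (by omega)).1 h2

section core
open Polynomial IntermediateField

set_option linter.unusedSectionVars false
variable {K Ω : Type} [NormedField K] [IsUltrametricDist K] [NormedField Ω] [IsUltrametricDist Ω]
  [Algebra K Ω] [IsAlgClosed Ω] [Algebra.IsAlgebraic K Ω] {p : ℕ} [hp : Fact p.Prime] [CharP K p]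

lemma avg (hτ : ∀ (τ : Ω ≃ₐ[K] Ω) (x : Ω), ‖τ x‖ = ‖x‖)
    {f : K} {α : Ω} (hα : α ^ p - α = algebraMap K Ω f)
    (h1 : ∀ g : K, 1 < ‖α - algebraMap K Ω g‖) (a : Ω) (hdeg : (minpoly K a).natDegree < p) :
    ∃ g : K, ‖α - algebraMap K Ω g‖ ≤ ‖α - a‖ := by
  have hp2 := hp.out.two_le
  have : CharP Ω p := charP_of_injective_algebraMap (algebraMap K Ω).injective p
  have : Normal K Ω := normal_iff.2 fun x =>
    ⟨(Algebra.IsAlgebraic.isAlgebraic x).isIntegral, IsAlgClosed.splits _⟩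
  have hint : IsIntegral K a := (Algebra.IsAlgebraic.isAlgebraic a).isIntegral
  set m := (minpoly K a).natDegree with hm
  have hm0 : 0 < m := minpoly.natDegree_pos hint
  set s := ((minpoly K a).map (algebraMap K Ω)).roots with hs
  have hspl : ((minpoly K a).map (algebraMap K Ω)).Splits := IsAlgClosed.splits _
  have hcard : Multiset.card s = m := by
    rw [hs, ← hspl.natDegree_eq_card_roots, natDegree_map]
  have hsum : s.sum = algebraMap K Ω (-(minpoly K a).nextCoeff) := by
    have := hspl.nextCoeff_eq_neg_sum_roots_of_monic ((minpoly.monic hint).map _)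
    rw [nextCoeff_map (algebraMap K Ω).injective] at this
    rw [map_neg, this, neg_neg]
  have hr : ∀ r ∈ s, ‖α - r‖ ≤ max ‖α - a‖ 1 := by
    intro r hr
    have hroot : aeval r (minpoly K a) = 0 := by
      have := (mem_roots'.1 hr).2
      rwa [IsRoot.def, eval_map_algebraMap] at this
    obtain ⟨τ, hτa⟩ : ∃ τ : Ω ≃ₐ[K] Ω, τ a = r := by
      have : IsConjRoot K a r := by
        rw [isConjRoot_iff_aeval_eq_zero hint]; exact hroot
      obtain ⟨τ, h⟩ := isConjRoot_iff_exists_algEquiv.1 this.symm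
      exact ⟨τ, h⟩
    have h2 : (τ α - α) ^ p = τ α - α := by
      have h3 := congrArg τ hα
      rw [map_sub, map_pow, AlgEquiv.commutes, ← hα] at h3
      rw [sub_pow_char]
      linear_combination h3
    have h4 : ‖τ α - α‖ ≤ 1 := by rcases norm_eq_one_of_pow hp2 h2 with h | h <;> simp [h]
    have e : α - r = τ (α - a) - (τ α - α) := by rw [map_sub, hτa]; ring
    rw [e]
    refine (unorm_sub_le_max _ _).trans (max_le_max ?_ h4)
    rw [hτ]
  have hmK : (m : K) ≠ 0 := by
    intro h
    exact absurd (Nat.le_of_dvd hm0 ((CharP.cast_eq_zero_iff K p m).1 h)) (by omega)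
  have hmO : (m : Ω) ≠ 0 := by
    have := (map_ne_zero (algebraMap K Ω)).2 hmK
    rwa [map_natCast] at this
  have hmn : ‖(m : Ω)‖ = 1 := by
    have : (m : Ω) ^ p = m := by
      have := map_natCast (frobenius Ω p) m
      rwa [frobenius_def] at this
    rcases norm_eq_one_of_pow hp2 this with h | h
    · exact absurd (norm_eq_zero.1 h) hmO
    · exact h
  have hsum2 : ∀ t : Multiset Ω, (∀ r ∈ t, ‖α - r‖ ≤ max ‖α - a‖ 1) →
      ‖Multiset.card t * α - t.sum‖ ≤ max ‖α - a‖ 1 := by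
    intro t
    induction t using Multiset.induction_on with
    | empty => intro _; simp
    | cons r t ih =>
      intro h
      have e : (Multiset.card (r ::ₘ t) : Ω) * α - (r ::ₘ t).sum
        = (α - r) + (Multiset.card t * α - t.sum) := by
        simp; ring
      rw [e]
      exact (IsUltrametricDist.norm_add_le_max _ _).trans (max_le (h r (by simp))
        (ih fun r hr => h r (by simp [hr])))
  refine ⟨-(minpoly K a).nextCoeff / m, ?_⟩
  have h5 := hsum2 s hr
  rw [hcard, hsum] at h5
  have h6 := h1 (-(minpoly K a).nextCoeff / m)
  have e : (m : Ω) * α - algebraMap K Ω (-(minpoly K a).nextCoeff)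
    = m * (α - algebraMap K Ω (-(minpoly K a).nextCoeff / m)) := by
    rw [map_div₀, map_natCast]; field_simp
  rw [e, norm_mul, hmn, one_mul] at h5
  rcases le_max_iff.1 h5 with h | h
  · exact h
  · linarith

lemma prodest {α : Ω} (h1 : ∀ g : K, 1 < ‖α - algebraMap K Ω g‖) (s : Multiset Ω)
    (hs : ∀ a ∈ s, ∃ g : K, ‖α - algebraMap K Ω g‖ ≤ ‖α - a‖) :
    ∃ g : K, ‖(s.map fun a => 1 + (α - a)⁻¹).prod - 1‖ ≤ ‖α - algebraMap K Ω g‖⁻¹ := by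
  induction s using Multiset.induction_on with
  | empty => exact ⟨0, by simp⟩
  | cons a t ih =>
    obtain ⟨g, hg⟩ := ih fun a ha => hs a (by simp [ha])
    obtain ⟨g', hg'⟩ := hs a (by simp)
    have h2 : ‖(α - a)⁻¹‖ ≤ ‖α - algebraMap K Ω g'‖⁻¹ := by
      rw [norm_inv]
      exact inv_anti₀ (by linarith [h1 g']) hg'
    set P := (t.map fun a => 1 + (α - a)⁻¹).prod
    have e : ((a ::ₘ t).map fun a => 1 + (α - a)⁻¹).prod - 1
      = (α - a)⁻¹ + ((P - 1) + (α - a)⁻¹ * (P - 1)) := by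
      simp [P]; ring
    have h3 : ‖(α - a)⁻¹ * (P - 1)‖ ≤ ‖P - 1‖ := by
      rw [norm_mul]
      refine mul_le_of_le_one_left (norm_nonneg _) (h2.trans ?_)
      exact inv_le_one_of_one_le₀ (h1 g').le
    have h4 : ‖((a ::ₘ t).map fun a => 1 + (α - a)⁻¹).prod - 1‖
      ≤ max ‖α - algebraMap K Ω g'‖⁻¹ ‖α - algebraMap K Ω g‖⁻¹ := by
      rw [e]
      refine (IsUltrametricDist.norm_add_le_max _ _).trans (max_le_max h2 ?_)
      exact (IsUltrametricDist.norm_add_le_max _ _).trans (max_le hg (h3.trans hg))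
    rcases le_max_iff.1 h4 with h | h
    · exact ⟨g', h⟩
    · exact ⟨g, h⟩

lemma polyest (hτ : ∀ (τ : Ω ≃ₐ[K] Ω) (x : Ω), ‖τ x‖ = ‖x‖)
    {f : K} {α : Ω} (hα : α ^ p - α = algebraMap K Ω f)
    (h1 : ∀ g : K, 1 < ‖α - algebraMap K Ω g‖) (P : K[X]) (hP : P.natDegree < p) 
    (hP0 : aeval α P ≠ 0) :
    ∃ g : K, ‖aeval (α + 1) P * (aeval α P)⁻¹ - 1‖ ≤ ‖α - algebraMap K Ω g‖⁻¹ := by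
  have hspl : (P.map (algebraMap K Ω)).Splits := IsAlgClosed.splits _
  have hPne : P ≠ 0 := by rintro rfl; simp at hP0
  obtain ⟨g, hg⟩ := prodest h1 (P.map (algebraMap K Ω)).roots (by
    intro a ha
    apply avg hτ hα h1
    have hroot : aeval a P = 0 := by
      have := (mem_roots'.1 ha).2
      rwa [IsRoot.def, eval_map_algebraMap] at this
    exact (natDegree_le_of_dvd (minpoly.dvd K a hroot) hPne).trans_lt hP)
  refine ⟨g, ?_⟩
  convert hg using 3
  have hev (y : Ω) : aeval y P = algebraMap K Ω P.leadingCoeff *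
      ((P.map (algebraMap K Ω)).roots.map fun a => y - a).prod := by
    rw [← eval_map_algebraMap]
    conv_lhs => rw [hspl.eq_prod_roots]
    rw [eval_mul, eval_C, leadingCoeff_map, eval_multiset_prod, Multiset.map_map]
    simp
  rw [← div_eq_mul_inv, hev, hev, mul_div_mul_left _ _
    ((map_ne_zero (algebraMap K Ω)).2 (leadingCoeff_ne_zero.2 hPne)), ← Multiset.prod_map_div]
  apply congrArg
  apply Multiset.map_congr rfl
  intro a ha
  have : α - a ≠ 0 := by
    intro h
    apply hP0
    rw [hev, Multiset.prod_eq_zero, mul_zero]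
    exact Multiset.mem_map.2 ⟨a, ha, h⟩
  field_simp
  ring

lemma minpoly_deg (hτ : ∀ (τ : Ω ≃ₐ[K] Ω) (x : Ω), ‖τ x‖ = ‖x‖)
    {f : K} {α : Ω} (hα : α ^ p - α = algebraMap K Ω f)
    (h1 : ∀ g : K, 1 < ‖α - algebraMap K Ω g‖) :
    (minpoly K α).natDegree = p ∧ minpoly K α = X ^ p - X - C f := by
  have hp2 := hp.out.two_le
  have hint : IsIntegral K α := (Algebra.IsAlgebraic.isAlgebraic α).isIntegral
  have hle : p ≤ (minpoly K α).natDegree := by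
    by_contra h
    obtain ⟨g, hg⟩ := avg hτ hα h1 α (by omega)
    have := h1 g
    simp at hg
    rw [hg] at this
    simp at this
    linarith
  have hdegq : (X ^ p - (X + C f) : K[X]).natDegree = p := by
    apply natDegree_sub_eq_left_of_natDegree_lt _ |>.trans (natDegree_X_pow p)
    rw [natDegree_X_pow, natDegree_X_add_C]; omega
  have hmon : (X ^ p - (X + C f) : K[X]).Monic := by
    apply monic_X_pow_sub
    rw [degree_X_add_C]; exact_mod_cast hp2
  have hroot : aeval α (X ^ p - (X + C f) : K[X]) = 0 := by
    simp [← hα]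
  have hdvd := minpoly.dvd K α hroot
  have e : minpoly K α = X ^ p - (X + C f) :=
    (eq_of_monic_of_dvd_of_natDegree_le (minpoly.monic hint) hmon hdvd (by rw [hdegq]; exact hle)).symm
  refine ⟨by rw [e, hdegq], by rw [e]; ring⟩

lemma ext_struct (hτ : ∀ (τ : Ω ≃ₐ[K] Ω) (x : Ω), ‖τ x‖ = ‖x‖)
    {f : K} {α : Ω} (hα : α ^ p - α = algebraMap K Ω f)
    (h1 : ∀ g : K, 1 < ‖α - algebraMap K Ω g‖) :
    IsCyclicOfDegree K K⟮α⟯ p ∧ ∃ σ : K⟮α⟯ ≃ₐ[K] K⟮α⟯,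
      σ (AdjoinSimple.gen K α) = AdjoinSimple.gen K α + 1 ∧ ∀ τ, τ ∈ Subgroup.zpowers σ := by
  obtain ⟨hdeg, hmin⟩ := minpoly_deg hτ hα h1
  have hint : IsIntegral K α := (Algebra.IsAlgebraic.isAlgebraic α).isIntegral
  have hfd : FiniteDimensional K K⟮α⟯ := adjoin.finiteDimensional hint
  have : CharP K⟮α⟯ p := charP_of_injective_algebraMap (algebraMap K K⟮α⟯).injective p
  have hfr : Module.finrank K K⟮α⟯ = p := by rw [adjoin.finrank hint, hdeg]
  set γ := AdjoinSimple.gen K α with hγ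
  have hγα : γ ^ p - γ = algebraMap K _ f := by
    apply Subtype.ext
    exact hα
  let pb := adjoin.powerBasis hint
  have hgen : pb.gen = γ := adjoin.powerBasis_gen hint
  let φ : K⟮α⟯ →ₐ[K] K⟮α⟯ := pb.lift (γ + 1) (by
    rw [hgen, hγ, minpoly_gen, hmin]
    simp only [map_sub, map_pow, aeval_X, aeval_C]
    rw [← hγα, add_pow_char, one_pow]; ring)
  have hφ : φ γ = γ + 1 := by rw [← hgen]; simp only [φ]; rw [pb.lift_gen, hgen]
  let σ : K⟮α⟯ ≃ₐ[K] K⟮α⟯ := AlgEquiv.ofBijective φ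
    ⟨φ.injective, LinearMap.surjective_of_injective (f := φ.toLinearMap) φ.injective⟩
  have hσ : σ γ = γ + 1 := hφ
  have hpow (n : ℕ) : (σ ^ n) γ = γ + n := by
    induction n with
    | zero => simp
    | succ n ih => rw [pow_succ', AlgEquiv.mul_apply, ih, map_add, hσ, map_natCast]; push_cast; ring
  have hσp : σ ^ p = 1 := by
    have h2 : ((σ ^ p : K⟮α⟯ ≃ₐ[K] K⟮α⟯) : K⟮α⟯ →ₐ[K] K⟮α⟯) = AlgHom.id K _ := by
      apply pb.algHom_ext
      rw [hgen]
      simp [hpow]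
    ext1 x
    exact DFunLike.congr_fun h2 x
  have hσ1 : σ ≠ 1 := by
    intro h
    rw [h] at hσ
    simp at hσ
  have hord : orderOf σ = p := orderOf_eq_prime hσp hσ1
  have hfin : Finite (K⟮α⟯ ≃ₐ[K] K⟮α⟯) := inferInstance
  have hcard : Nat.card (K⟮α⟯ ≃ₐ[K] K⟮α⟯) = p := by
    apply le_antisymm
    · have := AlgEquiv.card_le (F := K) (K := K⟮α⟯)
      rw [hfr] at this
      rwa [Nat.card_eq_fintype_card]
    · rw [← hord]; exact orderOf_le_card
  refine ⟨⟨IsGalois.of_card_aut_eq_finrank _ _ (by rw [hcard, hfr]), hfd,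
    isCyclic_of_prime_card hcard, hcard⟩, σ, hσ, fun τ => mem_zpowers_of_prime_card hcard hσ1⟩

lemma norm_of_integral (hK : ∀ x : K, ‖algebraMap K Ω x‖ = ‖x‖) (x : Ω)
    (hx : ((algebraMap K Ω).comp (algebraMap (nball K) K)).IsIntegralElem x) : ‖x‖ ≤ 1 := by
  obtain ⟨q, hq, h⟩ := hx
  let φ : nball K →+* nball Ω := ((algebraMap K Ω).comp (algebraMap (nball K) K)).codRestrict
    (nball Ω) (fun a => by rw [mem_nball]; exact (hK _).le.trans a.2)
  have : IsIntegral (nball Ω) x := by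
    refine ⟨q.map φ, hq.map φ, ?_⟩
    rw [eval₂_map]; exact h
  obtain ⟨y, hy⟩ := IsIntegrallyClosed.isIntegral_iff.1 this
  rw [← hy]; exact y.2

lemma norm_aut (hτ : ∀ (τ : Ω ≃ₐ[K] Ω) (x : Ω), ‖τ x‖ = ‖x‖) {α : Ω}
    (σ : K⟮α⟯ ≃ₐ[K] K⟮α⟯) (x : K⟮α⟯) : ‖((σ x : K⟮α⟯) : Ω)‖ = ‖(x : Ω)‖ := by
  have : Normal K Ω := normal_iff.2 fun x =>
    ⟨(Algebra.IsAlgebraic.isAlgebraic x).isIntegral, IsAlgClosed.splits _⟩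
  have h := AlgEquiv.liftNormal_commutes σ Ω x
  have h2 := hτ (σ.liftNormal Ω) (algebraMap K⟮α⟯ Ω x)
  rw [h] at h2
  exact h2

lemma norm_AS {f : K} (hK : ∀ x : K, ‖algebraMap K Ω x‖ = ‖x‖) {α : Ω}
    (hα : α ^ p - α = algebraMap K Ω f) (g : K) (hg : 1 < ‖f - g ^ p + g‖) :
    1 < ‖α - algebraMap K Ω g‖ ∧ ‖α - algebraMap K Ω g‖ ^ p = ‖f - g ^ p + g‖ := by
  have hp2 := hp.out.two_le
  have : CharP Ω p := charP_of_injective_algebraMap (algebraMap K Ω).injective p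
  set β := α - algebraMap K Ω g with hβ
  have e : β ^ p - β = algebraMap K Ω (f - g ^ p + g) := by
    rw [hβ, sub_pow_char, map_add, map_sub, map_pow, ← hα]; ring
  rw [← hK, ← e] at hg ⊢
  have h1 : 1 < ‖β‖ := by
    by_contra h
    push Not at h
    have : ‖β ^ p - β‖ ≤ 1 := (unorm_sub_le_max _ _).trans
      (max_le (by rw [norm_pow]; exact pow_le_one₀ (norm_nonneg _) h) h)
    linarith
  refine ⟨h1, ?_⟩
  have h2 : ‖-β‖ < ‖β ^ p‖ := by
    rw [norm_pow, norm_neg]; exact lt_self_pow₀ h1 (by omega)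
  rw [sub_eq_add_neg, IsUltrametricDist.norm_add_eq_max_of_norm_ne_norm h2.ne', max_eq_left h2.le,
    norm_pow]

theorem assoc_mem (hK : ∀ x : K, ‖algebraMap K Ω x‖ = ‖x‖)
    (hτ : ∀ (τ : Ω ≃ₐ[K] Ω) (x : Ω), ‖τ x‖ = ‖x‖)
    {f : K} {α : Ω} (hα : α ^ p - α = algebraMap K Ω f)
    (hf : ∀ g : K, 1 < ‖f - g ^ p + g‖) (H : Ideal (nball K))
    (hH : IsAssociatedIdeal (nball K) K⟮α⟯ H) (a : nball K) :
    a ∈ H ↔ ∃ g : K, ‖(a : K)‖ ≤ ‖f - g ^ p + g‖⁻¹ := by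
  have hp2 := hp.out.two_le
  have h1 : ∀ g : K, 1 < ‖α - algebraMap K Ω g‖ := fun g => (norm_AS hK hα g (hf g)).1
  have hnp : ∀ g : K, ‖α - algebraMap K Ω g‖ ^ p = ‖f - g ^ p + g‖ :=
    fun g => (norm_AS hK hα g (hf g)).2
  obtain ⟨⟨hgal, hfd, hcyc, hcard⟩, σ, hσ, hσg⟩ := ext_struct hτ hα h1
  have hint : IsIntegral K α := (Algebra.IsAlgebraic.isAlgebraic α).isIntegral
  let iA : Algebra (nball K) K⟮α⟯ := ((algebraMap K K⟮α⟯).comp (algebraMap (nball K) K)).toAlgebra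
  have iT : IsScalarTower (nball K) K K⟮α⟯ := IsScalarTower.of_algebraMap_eq fun _ => rfl
  have hH' := @hH iA iT σ hσg
  set J := Ideal.span {b : ↥(integralClosure ↥(nball K) K⟮α⟯) |
          ∃ x : (K⟮α⟯)ˣ, (b : K⟮α⟯) = σ (x : K⟮α⟯) * (x : K⟮α⟯)⁻¹ - 1} with hJ
  have hB : ∀ c : ↥(integralClosure ↥(nball K) K⟮α⟯), ‖((c : K⟮α⟯) : Ω)‖ ≤ 1 := by
    intro c
    apply norm_of_integral hK
    obtain ⟨q, hq, h⟩ := c.2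
    refine ⟨q, hq, ?_⟩
    have := congrArg (algebraMap K⟮α⟯ Ω) h
    rw [hom_eval₂, map_zero] at this
    exact this
  have hN : ∀ x : K⟮α⟯, ‖Algebra.norm K x‖ = ‖(x : Ω)‖ ^ p := by
    intro x
    have h2 := congrArg (algebraMap K⟮α⟯ Ω) (Algebra.norm_eq_prod_automorphisms K x)
    rw [← IsScalarTower.algebraMap_apply K K⟮α⟯ Ω, map_prod] at h2
    rw [← hK, h2, norm_prod]
    have h3 : ∀ τ : K⟮α⟯ ≃ₐ[K] K⟮α⟯, ‖algebraMap K⟮α⟯ Ω (τ x)‖ = ‖(x : Ω)‖ :=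
      fun τ => norm_aut hτ τ x
    simp only [h3, Finset.prod_const, Finset.card_univ]
    rw [← Nat.card_eq_fintype_card, hcard]
  set γ := AdjoinSimple.gen K α with hγ
  have hγc : (γ : Ω) = α := rfl
  have hgen1 : ∀ x : K⟮α⟯, x ≠ 0 → ∃ g : K, ‖((σ x * x⁻¹ - 1 : K⟮α⟯) : Ω)‖ ≤
      ‖α - algebraMap K Ω g‖⁻¹ := by
    intro x hx
    obtain ⟨P, hP, hxP⟩ := (adjoin.powerBasis hint).exists_eq_aeval x
    rw [adjoin.powerBasis_dim, (minpoly_deg hτ hα h1).1] at hP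
    rw [adjoin.powerBasis_gen, ← hγ] at hxP
    have e1 : (x : Ω) = aeval α P := by
      rw [hxP]
      exact (aeval_algebraMap_apply Ω γ P).symm
    have e2 : ((σ x : K⟮α⟯) : Ω) = aeval (α + 1) P := by
      have : σ x = aeval (γ + 1) P := by
        rw [← hσ, hxP]; exact (aeval_algHom_apply (σ : K⟮α⟯ →ₐ[K] K⟮α⟯) γ P).symm
      rw [this]
      exact (aeval_algebraMap_apply Ω (γ + 1) P).symm
    obtain ⟨g, hg⟩ := polyest hτ hα h1 P hP (by
      rw [← e1]; intro h; exact hx (Subtype.ext h))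
    refine ⟨g, ?_⟩
    rw [← e1, ← e2] at hg
    exact hg
  have hJle : ∀ b ∈ J, ∃ g : K, ‖((b : K⟮α⟯) : Ω)‖ ≤ ‖α - algebraMap K Ω g‖⁻¹ := by
    intro b hb
    induction hb using Submodule.span_induction with
    | mem b hb =>
      obtain ⟨x, hx⟩ := hb
      rw [hx]
      exact hgen1 x x.ne_zero
    | zero => exact ⟨0, by simp⟩
    | add x y _ _ hx hy =>
      obtain ⟨g, hg⟩ := hx
      obtain ⟨g', hg'⟩ := hy
      have := (IsUltrametricDist.norm_add_le_max ((x : K⟮α⟯) : Ω) ((y : K⟮α⟯) : Ω)).trans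
        (max_le_max hg hg')
      rcases le_max_iff.1 this with h | h
      · exact ⟨g, h⟩
      · exact ⟨g', h⟩
    | smul c x _ hx =>
      obtain ⟨g, hg⟩ := hx
      refine ⟨g, le_trans ?_ hg⟩
      have : (((c • x : integralClosure ↥(nball K) K⟮α⟯) : K⟮α⟯) : Ω)
        = ((c : K⟮α⟯) : Ω) * ((x : K⟮α⟯) : Ω) := rfl
      rw [this, norm_mul]
      exact mul_le_of_le_one_left (norm_nonneg _) (hB c)
  rw [hH']
  constructor
  · intro ha
    induction ha using Submodule.span_induction with
    | mem a ha =>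
      obtain ⟨b, hb, hab⟩ := ha
      obtain ⟨g, hg⟩ := hJle b hb
      refine ⟨g, ?_⟩
      have : (a : K) = Algebra.norm K (b : K⟮α⟯) := hab
      rw [this, hN, ← hnp, ← inv_pow]
      exact pow_le_pow_left₀ (norm_nonneg _) hg _
    | zero => exact ⟨0, by simp⟩
    | add x y _ _ hx hy =>
      obtain ⟨g, hg⟩ := hx
      obtain ⟨g', hg'⟩ := hy
      have := (IsUltrametricDist.norm_add_le_max (x : K) (y : K)).trans
        (max_le_max hg hg')
      rcases le_max_iff.1 this with h | h
      · exact ⟨g, h⟩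
      · exact ⟨g', h⟩
    | smul c x _ hx =>
      obtain ⟨g, hg⟩ := hx
      refine ⟨g, le_trans ?_ hg⟩
      have : ((c • x : nball K) : K) = (c : K) * (x : K) := rfl
      rw [this, norm_mul]
      exact mul_le_of_le_one_left (norm_nonneg _) c.2
  · rintro ⟨g, hg⟩
    set x : K⟮α⟯ := γ - algebraMap K _ g with hx
    have hxn : ‖(x : Ω)‖ ^ p = ‖f - g ^ p + g‖ := hnp g
    have hx0 : x ≠ 0 := by
      intro h
      have := h1 g
      have e : α - algebraMap K Ω g = (x : Ω) := rfl
      rw [e, h] at this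
      simp at this
      linarith
    have hfi : ‖(f - g ^ p + g)⁻¹‖ ≤ 1 := by
      rw [norm_inv]; exact inv_le_one_of_one_le₀ (hf g).le
    have hf0 : f - g ^ p + g ≠ 0 := by
      intro h; have := hf g; rw [h, norm_zero] at this; linarith
    let u : nball K := ⟨(f - g ^ p + g)⁻¹, hfi⟩
    have hxe : x ^ p - x = algebraMap K _ (f - g ^ p + g) := by
      have : CharP K⟮α⟯ p := charP_of_injective_algebraMap (algebraMap K K⟮α⟯).injective p
      have hγα : γ ^ p - γ = algebraMap K _ f := Subtype.ext hα
      rw [hx, sub_pow_char, map_add, map_sub, map_pow, ← hγα]; ring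
    have hxi : IsIntegral (nball K) x⁻¹ := by
      refine ⟨X ^ p + (C u * X ^ (p - 1) - C u), ?_, ?_⟩
      · apply monic_X_pow_add
        refine (degree_sub_le _ _).trans_lt (max_lt ?_ ?_)
        · refine (degree_C_mul_X_pow_le _ _).trans_lt ?_
          exact_mod_cast (by omega : p - 1 < p)
        · refine degree_C_le.trans_lt ?_
          exact_mod_cast (by omega : 0 < p)
      · have hu : algebraMap (nball K) K⟮α⟯ u = (x ^ p - x)⁻¹ := by
          rw [hxe, ← map_inv₀]; rfl
        have hne : x ^ p - x ≠ 0 := by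
          rw [hxe]; exact (_root_.map_ne_zero _).2 hf0
        simp only [eval₂_add, eval₂_sub, eval₂_mul, eval₂_pow, eval₂_X, eval₂_C]
        rw [hu]
        have e3 : x⁻¹ ^ (p - 1) = x⁻¹ ^ p * x := by
          have : x⁻¹ ^ p = x⁻¹ ^ (p - 1) * x⁻¹ := by
            rw [← pow_succ, Nat.sub_add_cancel (by omega)]
          rw [this, mul_assoc, inv_mul_cancel₀ hx0, mul_one]
        rw [e3]
        have e4 : x⁻¹ ^ p = (x ^ p)⁻¹ := inv_pow _ _
        have e5 : x ^ p ≠ 0 := pow_ne_zero _ hx0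
        rw [e4]
        generalize x ^ p = z at *
        field_simp
        ring
    let y : ↥(integralClosure ↥(nball K) K⟮α⟯) := ⟨x⁻¹, hxi⟩
    have hy : y ∈ J := by
      apply Ideal.subset_span
      refine ⟨Units.mk0 x hx0, ?_⟩
      have : σ x = x + 1 := by rw [hx, map_sub, hσ, AlgEquiv.commutes]; ring
      simp only [Units.val_mk0, this, y]
      field_simp
      ring
    have hyn : ‖Algebra.norm K (x⁻¹)‖ = ‖f - g ^ p + g‖⁻¹ := by
      rw [hN, ← hxn]
      push_cast
      rw [norm_inv, inv_pow]
    let n : nball K := ⟨Algebra.norm K (x⁻¹), by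
      rw [mem_nball, hyn, ← norm_inv]; exact hfi⟩
    have hn0 : (n : K) ≠ 0 := by
      rw [← norm_ne_zero_iff]
      show ‖Algebra.norm K (x⁻¹)‖ ≠ 0
      rw [hyn]; simpa using hf0
    let c : nball K := ⟨a / n, by
      rw [mem_nball, norm_div]
      refine div_le_one_of_le₀ ?_ (norm_nonneg _)
      show _ ≤ ‖Algebra.norm K (x⁻¹)‖
      rw [hyn]; exact hg⟩
    have hac : a = c * n := by
      apply Subtype.ext
      show (a : K) = a / n * n
      field_simp
    rw [hac]
    exact Ideal.mul_mem_left _ _ (Ideal.subset_span ⟨y, hy, rfl⟩)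

end core

section hens
variable {K : Type} [NormedField K] [IsUltrametricDist K]

lemma nball_dvd (c x : nball K) : c ∣ x ↔ ‖(x : K)‖ ≤ ‖(c : K)‖ := by
  constructor
  · rintro ⟨y, rfl⟩
    have : ((c * y : nball K) : K) = (c : K) * (y : K) := rfl
    rw [this, norm_mul]
    exact mul_le_of_le_one_right (norm_nonneg _) y.2
  · intro h
    by_cases hc : (c : K) = 0
    · have : (x : K) = 0 := by
        rw [hc, norm_zero] at h
        exact norm_le_zero_iff.1 h
      rw [Subtype.ext (a1 := x) (a2 := 0) this]
      exact dvd_zero _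
    · refine ⟨⟨x / c, ?_⟩, ?_⟩
      · rw [mem_nball, norm_div]
        exact div_le_one_of_le₀ h (norm_nonneg _)
      · apply Subtype.ext
        show (x : K) = c * (x / c)
        field_simp

lemma nball_unit (x : nball K) : IsUnit x ↔ ‖(x : K)‖ = 1 := by
  rw [isUnit_iff_dvd_one, nball_dvd]
  have := x.2
  rw [mem_nball] at this
  constructor
  · intro h; apply le_antisymm this; simpa using h
  · intro h; rw [h]; simp

lemma nball_max (x : nball K) : x ∈ IsLocalRing.maximalIdeal (nball K) ↔ ‖(x : K)‖ < 1 := by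
  rw [IsLocalRing.mem_maximalIdeal, mem_nonunits_iff, nball_unit]
  have := x.2
  rw [mem_nball] at this
  exact this.lt_iff_ne.symm

lemma nball_adic [CompleteSpace K] (c : nball K) (hc : ‖(c : K)‖ < 1) :
    IsAdicComplete (Ideal.span {c}) (nball K) := by
  have hm : ∀ (n : ℕ) (x y : nball K),
      x ≡ y [SMOD (Ideal.span {c} ^ n • ⊤ : Submodule (nball K) (nball K))] ↔
        ‖(x : K) - y‖ ≤ ‖(c : K)‖ ^ n := by
    intro n x y
    rw [SModEq.sub_mem, smul_eq_mul, Ideal.mul_top, Ideal.span_singleton_pow,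
      Ideal.mem_span_singleton, nball_dvd]
    have : ((c ^ n : nball K) : K) = (c : K) ^ n := rfl
    rw [this, norm_pow]; rfl
  have hlim : Filter.Tendsto (fun n : ℕ => ‖(c : K)‖ ^ n) Filter.atTop (nhds 0) :=
    tendsto_pow_atTop_nhds_zero_of_lt_one (norm_nonneg _) hc
  refine @IsAdicComplete.mk _ _ _ _ _ _ ⟨?_⟩ ⟨?_⟩
  · intro x hx
    have h : ‖(x : K)‖ ≤ 0 := by
      refine ge_of_tendsto' hlim fun n => ?_
      have := (hm n x 0).1 (hx n)
      simpa using this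
    exact Subtype.ext (norm_le_zero_iff.1 h)
  · intro f hf
    have hf' : ∀ m n, m ≤ n → ‖(f m : K) - f n‖ ≤ ‖(c : K)‖ ^ m := fun m n h =>
      (hm _ _ _).1 (hf h)
    have hC : CauchySeq fun n => (f n : K) := by
      refine cauchySeq_of_le_tendsto_0 (fun n => ‖(c : K)‖ ^ n + ‖(c : K)‖ ^ n) ?_ (by simpa using hlim.add hlim)
      intro n m N hn hm'
      have h3 : ∀ k, N ≤ k → dist (f k : K) (f N : K) ≤ ‖(c : K)‖ ^ N := by
        intro k hk; rw [dist_comm, dist_eq_norm]; exact hf' _ _ hk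
      exact (dist_triangle_right _ _ (f N : K)).trans (add_le_add (h3 _ hn) (h3 _ hm'))
    obtain ⟨L, hL⟩ := cauchySeq_tendsto_of_complete hC
    have hLn : ∀ n, ‖(f n : K) - L‖ ≤ ‖(c : K)‖ ^ n := by
      intro n
      have h4 : Filter.Tendsto (fun k => ‖(f n : K) - f k‖) Filter.atTop (nhds ‖(f n : K) - L‖) :=
        (hL.const_sub _).norm
      exact le_of_tendsto h4 (Filter.eventually_atTop.2 ⟨n, fun k hk => hf' _ _ hk⟩)
    have hL1 : ‖L‖ ≤ 1 := le_of_tendsto hL.norm (Filter.Eventually.of_forall fun k => (f k).2)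
    exact ⟨⟨L, hL1⟩, fun n => (hm _ _ _).2 (hLn n)⟩

lemma nball_hens [CompleteSpace K] : HenselianLocalRing (nball K) where
  is_henselian := by
    intro f hf a₀ h1 h2
    have hc := (nball_max _).1 h1
    have := nball_adic _ hc
    have hle : Ideal.span {f.eval a₀} ≤ IsLocalRing.maximalIdeal (nball K) := by
      rw [Ideal.span_le]; simpa using h1
    obtain ⟨a, ha, ha'⟩ := HenselianRing.is_henselian (I := Ideal.span {f.eval a₀}) f hf a₀
      (Ideal.subset_span rfl) (h2.map _)
    exact ⟨a, ha, hle ha'⟩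

end hens

section fin
open Polynomial IntermediateField

variable {K Ω : Type} [NormedField K] [IsUltrametricDist K] [NormedField Ω] [IsUltrametricDist Ω]
  [Algebra K Ω] [IsAlgClosed Ω] [Algebra.IsAlgebraic K Ω] {p : ℕ} [hp : Fact p.Prime] [CharP K p]

lemma exists_as (f : K) : ∃ α : Ω, α ^ p - α = algebraMap K Ω f := by
  have hp2 := hp.out.two_le
  have hdegq : (X ^ p - (X + Polynomial.C (algebraMap K Ω f)) : Polynomial Ω).natDegree = p := by
    apply natDegree_sub_eq_left_of_natDegree_lt _ |>.trans (natDegree_X_pow p)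
    rw [natDegree_X_pow, natDegree_X_add_C]; omega
  obtain ⟨α, h⟩ := IsAlgClosed.exists_root (X ^ p - (X + Polynomial.C (algebraMap K Ω f)) : Polynomial Ω) (by
    intro h
    rw [natDegree_eq_zero_iff_degree_le_zero.2 h.le] at hdegq
    omega)
  refine ⟨α, ?_⟩
  simp [IsRoot.def] at h
  linear_combination h

lemma core2 (hK : ∀ x : K, ‖algebraMap K Ω x‖ = ‖x‖)
    (hτ : ∀ (τ : Ω ≃ₐ[K] Ω) (x : Ω), ‖τ x‖ = ‖x‖) {f₁ f₂ : K} (b : nball K)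
    (hb0 : (b : K) ≠ 0) (hb1 : ‖(b : K)‖ < 1)
    (h1 : ‖f₁‖ = ‖(b : K)‖⁻¹ ^ p ∧ ∀ g, ‖(b : K)‖⁻¹ ^ p ≤ ‖f₁ - g ^ p + g‖)
    (h2 : (∀ g, ‖(b : K)‖⁻¹ ^ p < ‖f₂ - g ^ p + g‖) ∧
      ∀ r > ‖(b : K)‖⁻¹ ^ p, ∃ g, ‖f₂ - g ^ p + g‖ ≤ r) :
    ∃ (L₁ : Type) (_ : Field L₁) (_ : Algebra K L₁)
          (L₂ : Type) (_ : Field L₂) (_ : Algebra K L₂),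
          IsCyclicOfDegree K L₁ p ∧ IsCyclicOfDegree K L₂ p ∧
          (∀ H₁ : Ideal ↥(nball K), IsAssociatedIdeal (nball K) L₁ H₁ →
            H₁ = Ideal.span {b ^ p}) ∧
          (∀ H₂ : Ideal ↥(nball K), IsAssociatedIdeal (nball K) L₂ H₂ →
            H₂ = Ideal.span {b ^ p} * IsLocalRing.maximalIdeal ↥(nball K)) := by
  have hp2 := hp.out.two_le
  have hbp : 0 < ‖(b : K)‖ := norm_pos_iff.2 hb0
  have hbi : 1 < ‖(b : K)‖⁻¹ ^ p := one_lt_pow₀ ((one_lt_inv₀ hbp).2 hb1) (by omega)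
  have hf1 : ∀ g : K, 1 < ‖f₁ - g ^ p + g‖ := fun g => hbi.trans_le (h1.2 g)
  have hf2 : ∀ g : K, 1 < ‖f₂ - g ^ p + g‖ := fun g => hbi.trans (h2.1 g)
  obtain ⟨α₁, hα₁⟩ := exists_as (Ω := Ω) (p := p) f₁
  obtain ⟨α₂, hα₂⟩ := exists_as (Ω := Ω) (p := p) f₂
  have hbn : ‖((b ^ p : nball K) : K)‖ = ‖(b : K)‖ ^ p := norm_pow (b : K) p
  have hbpp : 0 < ‖(b : K)‖ ^ p := pow_pos hbp _
  refine ⟨K⟮α₁⟯, inferInstance, inferInstance, K⟮α₂⟯, inferInstance, inferInstance,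
    (ext_struct hτ hα₁ fun g => (norm_AS hK hα₁ g (hf1 g)).1).1,
    (ext_struct hτ hα₂ fun g => (norm_AS hK hα₂ g (hf2 g)).1).1, ?_, ?_⟩
  · intro H hH
    ext a
    rw [assoc_mem hK hτ hα₁ hf1 H hH, Ideal.mem_span_singleton, nball_dvd, hbn]
    constructor
    · rintro ⟨g, hg⟩
      refine hg.trans ?_
      have := inv_anti₀ (by linarith) (h1.2 g)
      rwa [inv_pow, inv_inv] at this
    · intro h
      refine ⟨0, ?_⟩
      rw [zero_pow (by omega), sub_zero, add_zero, h1.1, inv_pow, inv_inv]; exact h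
  · intro H hH
    ext a
    rw [assoc_mem hK hτ hα₂ hf2 H hH, Ideal.mem_span_singleton_mul]
    have : (∃ z ∈ IsLocalRing.maximalIdeal ↥(nball K), b ^ p * z = a) ↔
        ‖(a : K)‖ < ‖(b : K)‖ ^ p := by
      constructor
      · rintro ⟨z, hz, rfl⟩
        rw [nball_max] at hz
        have e : ((b ^ p * z : nball K) : K) = (b : K) ^ p * z := rfl
        rw [e, norm_mul, norm_pow]
        exact mul_lt_of_lt_one_right hbpp hz
      · intro h
        obtain ⟨z, rfl⟩ := (nball_dvd (b ^ p) a).2 (by rw [hbn]; exact h.le)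
        refine ⟨z, ?_, rfl⟩
        rw [nball_max]
        have e : ((b ^ p * z : nball K) : K) = (b : K) ^ p * z := rfl
        rw [e, norm_mul, norm_pow] at h
        by_contra h3
        push Not at h3
        nlinarith
    rw [this]
    constructor
    · rintro ⟨g, hg⟩
      refine hg.trans_lt ?_
      have := inv_strictAnti₀ (by linarith) (h2.1 g)
      rwa [inv_pow, inv_inv] at this
    · intro h
      by_cases ha : (a : K) = 0
      · exact ⟨0, by rw [ha, norm_zero]; positivity⟩
      · have hap : 0 < ‖(a : K)‖ := norm_pos_iff.2 ha
        obtain ⟨g, hg⟩ := h2.2 ‖(a : K)‖⁻¹ (by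
          rw [inv_pow]; exact inv_strictAnti₀ hap h)
        refine ⟨g, ?_⟩
        have := inv_anti₀ (by linarith [hf2 g]) hg
        rwa [inv_inv] at this

end fin

lemma final1 {p : ℕ} [Fact p.Prime] {K : Type} [NontriviallyNormedField K] [CompleteSpace K]
    [IsUltrametricDist K] [CharP K p]
    (hsurj : ∀ r : ℝ, ∃ x : K, x ≠ 0 ∧ Real.log ‖x‖ = r) {f₁ f₂ b : K}
    (hb0 : b ≠ 0) (hb1 : ‖b‖ < 1)
    (h1 : ‖f₁‖ = ‖b‖⁻¹ ^ p ∧ ∀ g, ‖b‖⁻¹ ^ p ≤ ‖f₁ - g ^ p + g‖)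
    (h2 : (∀ g, ‖b‖⁻¹ ^ p < ‖f₂ - g ^ p + g‖) ∧
      ∀ r > ‖b‖⁻¹ ^ p, ∃ g, ‖f₂ - g ^ p + g‖ ≤ r) : 
    ∃ (K : Type) (_ : Field K) (_ : CharP K p) (A : ValuationSubring K)
      (_ : HenselianLocalRing ↥A),
      ¬IsField ↥A ∧
      (∃ Γ : AddSubgroup ℝ, Γ ≠ ⊥ ∧ ¬Nonempty (↥Γ ≃+ ℤ) ∧
        Nonempty ((Kˣ ⧸ A.unitGroup) ≃* Multiplicative ↥Γ)) ∧
      ∃ b : ↥A, b ≠ 0 ∧ b ∈ IsLocalRing.maximalIdeal ↥A ∧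
        ∃ (L₁ : Type) (_ : Field L₁) (_ : Algebra K L₁)
          (L₂ : Type) (_ : Field L₂) (_ : Algebra K L₂),
          IsCyclicOfDegree K L₁ p ∧ IsCyclicOfDegree K L₂ p ∧
          (∀ H₁ : Ideal ↥A, IsAssociatedIdeal A L₁ H₁ →
            H₁ = Ideal.span {b ^ p}) ∧
          (∀ H₂ : Ideal ↥A, IsAssociatedIdeal A L₂ H₂ →
            H₂ = Ideal.span {b ^ p} * IsLocalRing.maximalIdeal ↥A) := by
  let b' : nball K := ⟨b, hb1.le⟩
  have hb'0 : b' ≠ 0 := fun h => hb0 (congrArg Subtype.val h)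
  have hb'm : b' ∈ IsLocalRing.maximalIdeal (nball K) := (nball_max b').2 hb1
  refine ⟨K, inferInstance, inferInstance, nball K, nball_hens, ?_, ?_, b', hb'0, hb'm, ?_⟩
  · intro h
    obtain ⟨c, hc⟩ := h.mul_inv_cancel hb'0
    exact (IsLocalRing.mem_maximalIdeal _).1 hb'm (IsUnit.of_mul_eq_one _ hc)
  · refine ⟨⊤, ?_, ?_, ?_⟩
    · intro h
      have : (1 : ℝ) ∈ (⊤ : AddSubgroup ℝ) := trivial
      rw [h, AddSubgroup.mem_bot] at this
      exact one_ne_zero this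
    · rintro ⟨e⟩
      obtain ⟨x, hx⟩ := e.surjective 1
      have h3 : x = ⟨(x : ℝ) / 2, trivial⟩ + ⟨(x : ℝ) / 2, trivial⟩ := by
        apply Subtype.ext; simp
      rw [h3, map_add] at hx
      omega
    · let φ : Kˣ →* Multiplicative (⊤ : AddSubgroup ℝ) :=
        { toFun := fun x => Multiplicative.ofAdd ⟨Real.log ‖(x : K)‖, trivial⟩
          map_one' := by
            apply Multiplicative.toAdd.injective
            apply Subtype.ext
            simp
          map_mul' := by
            intro x y
            apply Multiplicative.toAdd.injective
            apply Subtype.ext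
            simp [Real.log_mul] }
      have hφ : Function.Surjective φ := by
        intro r
        obtain ⟨x, hx, hr⟩ := hsurj (r.toAdd : ℝ)
        refine ⟨Units.mk0 x hx, ?_⟩
        apply Multiplicative.toAdd.injective
        apply Subtype.ext
        simpa [φ] using hr
      have hker : (nball K).unitGroup = φ.ker := by
        ext x
        have hpos : 0 < ‖(x : K)‖ := norm_pos_iff.2 x.ne_zero
        have e1 : x ∈ φ.ker ↔ Real.log ‖(x : K)‖ = 0 := by
          rw [MonoidHom.mem_ker]
          constructor
          · intro h; exact congrArg (fun z => ((Multiplicative.toAdd z : (⊤ : AddSubgroup ℝ)) : ℝ)) h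
          · intro h
            apply Multiplicative.toAdd.injective
            apply Subtype.ext
            simpa [φ] using h
        rw [e1, ValuationSubring.mem_unitGroup_iff]
        have e2 : (nball K).valuation (x : K) = 1 ↔ ‖(x : K)‖ = 1 := by
          have e3 : (nball K).valuation (x : K) ≤ 1 ↔ ‖(x : K)‖ ≤ 1 :=
            (nball K).valuation_le_one_iff _
          have e4 : (nball K).valuation ((x : K)⁻¹) ≤ 1 ↔ ‖(x : K)⁻¹‖ ≤ 1 :=
            (nball K).valuation_le_one_iff _
          have hv : 0 < (nball K).valuation (x : K) := by
            rw [Valuation.pos_iff]; exact x.ne_zero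
          rw [map_inv₀, norm_inv, inv_le_one₀ hpos, inv_le_one₀ hv] at e4
          rw [le_antisymm_iff, e3, e4, le_antisymm_iff]
        rw [e2, Real.log_eq_zero]
        constructor
        · intro h; simp [h]
        · rintro (h | h | h) <;> linarith
      exact ⟨(QuotientGroup.quotientMulEquivOfEq hker).trans
        (QuotientGroup.quotientKerEquivOfSurjective φ hφ)⟩
  · let Ω := AlgebraicClosure K
    letI iN : NormedField Ω := spectralNorm.normedField K Ω
    haveI : IsUltrametricDist Ω := by
      refine IsUltrametricDist.isUltrametricDist_of_forall_norm_add_le_max_norm ?_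
      exact isNonarchimedean_spectralNorm (K := K) (L := Ω)
    haveI : IsAlgClosed Ω := AlgebraicClosure.isAlgClosed K
    haveI : Algebra.IsAlgebraic K Ω := AlgebraicClosure.isAlgebraic K
    exact core2 (Ω := Ω) (fun x => spectralNorm_extends (K := K) (L := Ω) x)
      (fun τ x => (spectralNorm_eq_of_equiv (K := K) (L := Ω) τ x).symm) b' hb0 hb1 h1 h2
/-- For every prime `p` there are a field `K` of characteristic `p`, a Henselian valuation
ring `A` with fraction field `K` which is not a field and whose value group `Kˣ/Aˣ` is
isomorphic to a nonzero subgroup of `ℝ` not isomorphic to `ℤ`, a nonzero element `b` of the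
maximal ideal of `A`, and cyclic Galois extensions `L₁`, `L₂` of `K` of degree `p` such that
the ideal of `A` associated to `L₁/K` is the principal ideal `b^p·A` and the ideal of `A`
associated to `L₂/K` is the (non-principal) ideal `b^p·m_A`. -/
theorem exists_assoc_ideals_principal_and_nonprincipal (p : ℕ) (hp : p.Prime) :
    ∃ (K : Type) (_ : Field K) (_ : CharP K p) (A : ValuationSubring K)
      (_ : HenselianLocalRing ↥A),
      ¬IsField ↥A ∧
      (∃ Γ : AddSubgroup ℝ, Γ ≠ ⊥ ∧ ¬Nonempty (↥Γ ≃+ ℤ) ∧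
        Nonempty ((Kˣ ⧸ A.unitGroup) ≃* Multiplicative ↥Γ)) ∧
      ∃ b : ↥A, b ≠ 0 ∧ b ∈ IsLocalRing.maximalIdeal ↥A ∧
        ∃ (L₁ : Type) (_ : Field L₁) (_ : Algebra K L₁)
          (L₂ : Type) (_ : Field L₂) (_ : Algebra K L₂),
          IsCyclicOfDegree K L₁ p ∧ IsCyclicOfDegree K L₂ p ∧
          (∀ H₁ : Ideal ↥A, IsAssociatedIdeal A L₁ H₁ →
            H₁ = Ideal.span {b ^ p}) ∧
          (∀ H₂ : Ideal ↥A, IsAssociatedIdeal A L₂ H₂ →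
            H₂ = Ideal.span {b ^ p} * IsLocalRing.maximalIdeal ↥A) := by
  haveI : Fact p.Prime := ⟨hp⟩
  have hp2 := hp.two_le
  obtain ⟨F, iF, hU, hC, hsurj, b, f₁, f₂, hb0, hb1, ⟨h1, h1'⟩, h2, h2'⟩ := exists_F p
  let K := UniformSpace.Completion F
  have hbK : ((b : F) : K) ≠ 0 := by
    rw [← norm_ne_zero_iff, UniformSpace.Completion.norm_coe]; exact norm_ne_zero_iff.2 hb0
  letI iK : NontriviallyNormedField K :=
    { (inferInstance : NormedField K) with
      non_trivial := ⟨(((b : F) : K))⁻¹, by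
        rw [norm_inv, UniformSpace.Completion.norm_coe]
        exact (one_lt_inv₀ (norm_pos_iff.2 hb0)).2 hb1⟩ }
  haveI : IsUltrametricDist K := by
    refine IsUltrametricDist.isUltrametricDist_of_forall_norm_add_le_max_norm ?_
    intro x y
    induction x, y using UniformSpace.Completion.induction_on₂ with
    | hp =>
      exact isClosed_le (by fun_prop) (by fun_prop)
    | ih x y =>
      have e1 : ‖(x : K) + (y : K)‖ = ‖x + y‖ := by
        rw [← UniformSpace.Completion.norm_coe (x + y), UniformSpace.Completion.coe_add]
      have e2 : ‖(x : K)‖ = ‖x‖ := UniformSpace.Completion.norm_coe x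
      have e3 : ‖(y : K)‖ = ‖y‖ := UniformSpace.Completion.norm_coe y
      exact (e1.trans_le (IsUltrametricDist.norm_add_le_max x y)).trans_eq
        (congrArg₂ max e2.symm e3.symm)
  haveI : CharP K p := charP_of_injective_ringHom
    (f := (UniformSpace.Completion.coeRingHom : F →+* K)) (RingHom.injective _) p
  have hcoe : ∀ f g : F, (f : K) - (g : K) ^ p + (g : K) = ((f - g ^ p + g : F) : K) := by
    intro f g
    have := UniformSpace.Completion.coeRingHom (α := F)
    change UniformSpace.Completion.coeRingHom f - (UniformSpace.Completion.coeRingHom g) ^ p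
      + UniformSpace.Completion.coeRingHom g = UniformSpace.Completion.coeRingHom (f - g ^ p + g)
    simp only [map_add, map_sub, map_pow]
  have hbi : 1 < ‖b‖⁻¹ ^ p :=
    one_lt_pow₀ ((one_lt_inv₀ (norm_pos_iff.2 hb0)).2 hb1) (by omega)
  -- approximation of elements of the completion
  have happ : ∀ (f : F) (g : K), ∃ g' : F,
      ‖(f : K) - g ^ p + g‖ ≤ 1 ∧ ‖f - g' ^ p + g'‖ ≤ 1 ∨
      ‖(f : K) - g ^ p + g‖ = ‖f - g' ^ p + g'‖ := by
    intro f g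
    obtain ⟨g', hg'⟩ : ∃ g' : F, dist g (g' : K) < 1 :=
      (UniformSpace.Completion.denseRange_coe (α := F)).exists_dist_lt g one_pos
    rw [dist_eq_norm] at hg'
    refine ⟨g', ?_⟩
    rw [← UniformSpace.Completion.norm_coe (f - g' ^ p + g'), ← hcoe]
    set d := g - (g' : K) with hd
    have e : (f : K) - g ^ p + g = ((f : K) - (g' : K) ^ p + (g' : K)) + (d - d ^ p) := by
      rw [hd, sub_pow_char]; ring
    have hdn : ‖d - d ^ p‖ ≤ 1 := (unorm_sub_le_max _ _).trans
      (max_le hg'.le (by rw [norm_pow]; exact pow_le_one₀ (norm_nonneg _) hg'.le))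
    rw [e]
    by_cases h : ‖(f : K) - (g' : K) ^ p + (g' : K)‖ ≤ 1
    · exact Or.inl ⟨(IsUltrametricDist.norm_add_le_max _ _).trans (max_le h hdn), h⟩
    · right
      push Not at h
      have h3 := hdn.trans_lt h
      rw [IsUltrametricDist.norm_add_eq_max_of_norm_ne_norm h3.ne', max_eq_left h3.le]
  have hbn : ‖(b : K)‖ = ‖b‖ := UniformSpace.Completion.norm_coe b
  refine final1 (K := K) (p := p) (b := (b : K)) (f₁ := (f₁ : K)) (f₂ := (f₂ : K)) ?_ hbK ?_ ?_ ?_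
  · intro r
    obtain ⟨x, hx, hr⟩ := hsurj r
    refine ⟨(x : K), ?_, ?_⟩
    · rw [← norm_ne_zero_iff, UniformSpace.Completion.norm_coe]; exact norm_ne_zero_iff.2 hx
    · rw [UniformSpace.Completion.norm_coe]; exact hr
  · rw [hbn]; exact hb1
  · rw [hbn]
    refine ⟨(UniformSpace.Completion.norm_coe f₁).trans h1, fun g => ?_⟩
    obtain ⟨g', ⟨_, h⟩ | h⟩ := happ f₁ g
    · linarith [h1' g']
    · rw [h]; exact h1' g'
  · rw [hbn]
    refine ⟨fun g => ?_, fun r hr => ?_⟩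
    · obtain ⟨g', ⟨_, h⟩ | h⟩ := happ f₂ g
      · linarith [h2 g']
      · rw [h]; exact h2 g'
    · obtain ⟨g, hg⟩ := h2' r hr
      refine ⟨(g : K), ?_⟩
      rw [hcoe, UniformSpace.Completion.norm_coe]; exact hg
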